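/- arXiv:2305.19808 — 2 statements merged into one kernel-verified Lean document; each statement's English description precedes it below -/
import Mathlib

section
/- For every rational number x, the forward orbit of x under the extension of f_Γ to ℝ ∪ {∞} eventually reaches ∞: there exists n ∈ ℕ such that f̂_Γ^[n](x) = ∞. -/
/-!
On rationals `fGamma` runs the Euclidean algorithm, up to signs. For `x = p / q` in lowest terms, a
step keeps `q` and lowers `|p|` by `q` if `|p| ≥ q`, and exchanges `|p|` and `q` if `0 < |p| < q`.
Either way `2 * q + |p|` strictly decreases, so the orbit must reach `0`, and then `∞`.
-/

open OnePoint

noncomputable def fGamma (x : ℝ) : ℝ :=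
  if x ≤ -1 then x + 1
  else if x < 1 then -1 / x
  else x - 1

noncomputable def fHat (p : OnePoint ℝ) : OnePoint ℝ :=
  Option.elim p (∞ : OnePoint ℝ)
    (fun x => if x = 0 then (∞ : OnePoint ℝ) else ((fGamma x : ℝ) : OnePoint ℝ))

theorem fHat_coe_zero : fHat ((0 : ℝ) : OnePoint ℝ) = ∞ :=
  if_pos rfl

theorem fHat_coe_of_ne_zero {x : ℝ} (hx : x ≠ 0) : fHat (x : OnePoint ℝ) = (fGamma x : ℝ) :=
  if_neg hx

theorem fGamma_of_le_neg_one {x : ℝ} (hx : x ≤ -1) : fGamma x = x + 1 :=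
  if_pos hx

theorem fGamma_of_abs_lt_one {x : ℝ} (hx : |x| < 1) : fGamma x = -1 / x := by
  obtain ⟨hneg, hpos⟩ := abs_lt.mp hx
  rw [fGamma, if_neg hneg.not_ge, if_pos hpos]

theorem fGamma_of_one_le {x : ℝ} (hx : 1 ≤ x) : fGamma x = x - 1 := by
  rw [fGamma, if_neg (by linarith), if_neg hx.not_gt]

/-- The quantity `2 * q + |p|` attached to a rational `p / q` in lowest terms: the termination
measure of the Euclidean algorithm performed by `fGamma`. The factor `2` makes exchanging `|p|` and
`q` lower the weight when `|p| < q`. -/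
def euclidWeight (x : ℚ) : ℕ :=
  2 * x.den + x.num.natAbs

theorem euclidWeight_neg (x : ℚ) : euclidWeight (-x) = euclidWeight x := by
  simp [euclidWeight]

theorem euclidWeight_sub_one_lt {x : ℚ} (hx : 1 ≤ x) : euclidWeight (x - 1) < euclidWeight x := by
  have hden_le : (x.den : ℤ) ≤ x.num := not_lt.mp (Rat.num_lt_denom_iff.not.mpr hx.not_gt)
  have hden_pos := x.den_pos
  have hden : (x - 1).den = x.den := mod_cast Rat.sub_intCast_den x 1
  have hnum : (x - 1).num = x.num - x.den := by
    have : ((x - 1).num : ℚ) = x.num - x.den := by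
      rw [← Rat.mul_den_eq_num, ← Rat.mul_den_eq_num, hden, sub_one_mul]
    exact_mod_cast this
  rw [euclidWeight, euclidWeight, hden, hnum]
  omega

theorem euclidWeight_add_one_lt {x : ℚ} (hx : x ≤ -1) : euclidWeight (x + 1) < euclidWeight x := by
  calc euclidWeight (x + 1) = euclidWeight (-x - 1) := by rw [← euclidWeight_neg]; congr 1; ring
    _ < euclidWeight (-x) := euclidWeight_sub_one_lt (le_neg.mp hx)
    _ = euclidWeight x := euclidWeight_neg x

theorem euclidWeight_inv_lt {x : ℚ} (hx₀ : x ≠ 0) (hx₁ : |x| < 1) :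
    euclidWeight x⁻¹ < euclidWeight x := by
  have hnum_lt : x.num.natAbs < x.den := by
    zify
    simpa only [Rat.num_abs_eq_abs_num, Rat.den_abs_eq_den] using Rat.num_lt_denom_iff.mpr hx₁
  have hden : x⁻¹.den = x.num.natAbs := Rat.den_inv_of_ne_zero hx₀
  have hnum : x⁻¹.num.natAbs = x.den := by
    rw [← Rat.den_inv_of_ne_zero (inv_ne_zero hx₀), inv_inv]
  rw [euclidWeight, euclidWeight, hnum, hden]
  omega

theorem exists_fGamma_eq_and_euclidWeight_lt {x : ℚ} (hx : x ≠ 0) :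
    ∃ y : ℚ, fGamma x = y ∧ euclidWeight y < euclidWeight x := by
  rcases lt_or_ge |x| 1 with hlt | habs
  · have hlt' : |(x : ℝ)| < 1 := by exact_mod_cast hlt
    refine ⟨-x⁻¹, ?_, ?_⟩
    · rw [fGamma_of_abs_lt_one hlt']
      push_cast
      ring
    · rw [euclidWeight_neg]
      exact euclidWeight_inv_lt hx hlt
  rcases le_abs'.mp habs with hle | hge
  · have hle' : (x : ℝ) ≤ -1 := by exact_mod_cast hle
    exact ⟨x + 1, by rw [fGamma_of_le_neg_one hle']; norm_cast, euclidWeight_add_one_lt hle⟩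
  · have hge' : (1 : ℝ) ≤ x := by exact_mod_cast hge
    exact ⟨x - 1, by rw [fGamma_of_one_le hge']; norm_cast, euclidWeight_sub_one_lt hge⟩

theorem stmt_12 (x : ℚ) :
    ∃ n : ℕ, fHat^[n] (((x : ℝ) : OnePoint ℝ)) = (∞ : OnePoint ℝ) := by
  induction x using (measure euclidWeight).wf.induction with
  | _ x ih =>
    rcases eq_or_ne x 0 with rfl | hx
    · exact ⟨1, by simpa using fHat_coe_zero⟩
    obtain ⟨y, hxy, hlt⟩ := exists_fGamma_eq_and_euclidWeight_lt hx
    obtain ⟨n, hn⟩ := ih y hlt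
    refine ⟨n + 1, ?_⟩
    rw [Function.iterate_succ_apply, fHat_coe_of_ne_zero (Rat.cast_ne_zero.mpr hx), hxy, hn]
end

section
/- The cube root of 2 is not periodic under f_Γ: for every integer N ≥ 1, f_Γ^[N](∛2) ≠ ∛2. -/
/-- `x` is a root of no nonzero integer polynomial of degree at most two; thus `x` is neither
rational nor a quadratic irrational. -/
def NotQuadratic (x : ℝ) : Prop :=
  ∀ a b c : ℤ, (a : ℝ) * x ^ 2 + b * x + c = 0 → a = 0 ∧ b = 0 ∧ c = 0

/-- `x = (p y + q) / (r y + s)` for a matrix with rows `p, q` and `r, s`, nonnegative integer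
entries of sum at least `k`, and determinant `±1`. The relation is stated without the division;
the bound `k` measures how far the matrix is from the identity, for which it is `2`. -/
def IsUnimodularImage (k : ℕ) (x y : ℝ) : Prop :=
  ∃ p q r s : ℕ, k ≤ p + q + r + s ∧ IsUnit (p * s - q * r : ℤ) ∧ x * (r * y + s) = p * y + q

section NotQuadratic

open Polynomial

theorem NotQuadratic.irrational {x : ℝ} (hx : NotQuadratic x) : Irrational x := by
  rw [irrational_iff_ne_rational]
  rintro a b hb rfl
  have hb' : (b : ℝ) ≠ 0 := Int.cast_ne_zero.mpr hb
  exact hb (hx 0 b (-a) (by push_cast; field_simp; ring)).2.1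

theorem NotQuadratic.abs {x : ℝ} (hx : NotQuadratic x) : NotQuadratic |x| := by
  intro a b c h
  rcases abs_choice x with habs | habs <;> rw [habs] at h
  · exact hx a b c h
  · simpa only [neg_eq_zero] using hx a (-b) c (by push_cast; linear_combination h)

theorem notQuadratic_of_two_lt_natDegree_minpoly {x : ℝ} (hx : 2 < (minpoly ℚ x).natDegree) :
    NotQuadratic x := by
  intro a b c h
  let P : ℚ[X] := C (a : ℚ) * X ^ 2 + C (b : ℚ) * X + C (c : ℚ)
  have hroot : aeval x P = 0 := by simpa [P] using h
  have hP : P = 0 := by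
    by_contra hne
    exact hx.not_ge <| (natDegree_le_natDegree (minpoly.degree_le_of_ne_zero ℚ x hne hroot)).trans
      natDegree_quadratic_le
  refine ⟨?_, ?_, ?_⟩
  · simpa [P, coeff_X, coeff_C, -eq_intCast, -map_intCast] using congrArg (coeff · 2) hP
  · simpa [P, coeff_X, coeff_C, -eq_intCast, -map_intCast] using congrArg (coeff · 1) hP
  · simpa [P, coeff_X, coeff_C, -eq_intCast, -map_intCast] using congrArg (coeff · 0) hP

theorem notQuadratic_of_cube_eq {x : ℝ} {q : ℚ} (hx : x ^ 3 = q) (hq : ∀ b : ℚ, b ^ 3 ≠ q) :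
    NotQuadratic x := by
  apply notQuadratic_of_two_lt_natDegree_minpoly
  have hmin : X ^ 3 - C q = minpoly ℚ x :=
    minpoly.eq_of_irreducible_of_monic (X_pow_sub_C_irreducible_of_prime Nat.prime_three hq)
      (by simp [hx]) (monic_X_pow_sub_C q three_ne_zero)
  rw [← hmin, natDegree_X_pow_sub_C]
  norm_num

theorem rat_cube_ne_two (b : ℚ) : b ^ 3 ≠ 2 := by
  intro hb
  have hcube : (b : ℝ) ^ 3 = (2 : ℤ) := by exact_mod_cast hb
  exact b.not_irrational
    (irrational_nrt_of_n_not_dvd_multiplicity 3 two_ne_zero 2 hcube (by simp))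

theorem notQuadratic_cbrt_two : NotQuadratic ((2 : ℝ) ^ ((1 : ℝ) / 3)) := by
  refine notQuadratic_of_cube_eq (q := 2) ?_ rat_cube_ne_two
  rw [← Real.rpow_mul_natCast zero_le_two]
  norm_num

end NotQuadratic

namespace IsUnimodularImage

variable {k : ℕ} {x y : ℝ}

protected theorem refl (x : ℝ) : IsUnimodularImage 2 x x :=
  ⟨1, 0, 0, 1, by norm_num, by norm_num, by simp⟩

theorem mono {l : ℕ} (hlk : l ≤ k) : IsUnimodularImage k x y → IsUnimodularImage l x y
  | ⟨p, q, r, s, hk, hdet, hxy⟩ => ⟨p, q, r, s, hlk.trans hk, hdet, hxy⟩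

theorem sub_one : IsUnimodularImage k x y → IsUnimodularImage (k + 1) x (y - 1) := by
  rintro ⟨p, q, r, s, hk, hdet, hxy⟩
  have hcol : p + r ≠ 0 := by
    intro h
    obtain ⟨rfl, rfl⟩ := Nat.add_eq_zero_iff.mp h
    simp at hdet
  refine ⟨p, p + q, r, r + s, by lia, ?_, ?_⟩
  · convert hdet using 1
    push_cast
    ring
  · push_cast
    linear_combination hxy

theorem inv (hy : y ≠ 0) : IsUnimodularImage k x y → IsUnimodularImage k x y⁻¹ := by
  rintro ⟨p, q, r, s, hk, hdet, hxy⟩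
  refine ⟨q, p, s, r, by lia, ?_, ?_⟩
  · simpa only [neg_sub] using hdet.neg
  · field_simp
    linear_combination hxy

theorem le_two_of_notQuadratic (hx : NotQuadratic x) (h : IsUnimodularImage k x x) : k ≤ 2 := by
  obtain ⟨p, q, r, s, hk, hdet, hfix⟩ := h
  obtain ⟨hr, hsp, hq⟩ := hx r (s - p) (-q) (by push_cast; linear_combination hfix)
  obtain rfl : r = 0 := by lia
  obtain rfl : q = 0 := by lia
  obtain rfl : s = p := by lia
  have hs : s = 1 := by
    rw [Nat.cast_zero, mul_zero, sub_zero] at hdet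
    exact Nat.isUnit_iff.mp (Int.ofNat_isUnit.mp (isUnit_of_mul_isUnit_left hdet))
  lia

end IsUnimodularImage

theorem abs_fGamma_of_one_le_abs {x : ℝ} (hx : 1 ≤ |x|) : |fGamma x| = |x| - 1 := by
  unfold fGamma
  rcases le_abs'.mp hx with hneg | hpos
  · rw [if_pos hneg, abs_of_nonpos (by linarith), abs_of_nonpos (by linarith)]
    ring
  · rw [if_neg (by linarith), if_neg (by linarith), abs_of_nonneg (by linarith),
      abs_of_nonneg (by linarith)]

theorem abs_fGamma_of_abs_lt_one {x : ℝ} (hx : |x| < 1) : |fGamma x| = |x|⁻¹ := by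
  obtain ⟨hneg, hpos⟩ := abs_lt.mp hx
  rw [fGamma, if_neg hneg.not_ge, if_pos hpos, abs_div, abs_neg, abs_one, one_div]

theorem irrational_fGamma {x : ℝ} (hx : Irrational x) : Irrational (fGamma x) := by
  unfold fGamma
  split_ifs
  · simpa using hx.add_natCast 1
  · simpa [neg_div] using hx
  · simpa using hx.sub_natCast 1

theorem irrational_fGamma_iterate {x : ℝ} (hx : Irrational x) (n : ℕ) :
    Irrational (fGamma^[n] x) :=
  Function.Iterate.rec Irrational hx (fun _ ↦ irrational_fGamma) n

namespace IsUnimodularImage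

variable {k : ℕ} {x y : ℝ}

theorem abs_fGamma (hy : y ≠ 0) (h : IsUnimodularImage k x |y|) :
    IsUnimodularImage k x |fGamma y| := by
  rcases le_or_gt 1 |y| with hle | hlt
  · rw [abs_fGamma_of_one_le_abs hle]
    exact h.sub_one.mono k.le_succ
  · rw [abs_fGamma_of_abs_lt_one hlt]
    exact h.inv (abs_ne_zero.mpr hy)

theorem abs_fGamma_fGamma (hy : Irrational y) (h : IsUnimodularImage k x |y|) :
    IsUnimodularImage (k + 1) x |fGamma (fGamma y)| := by
  rcases le_or_gt 1 |y| with hle | hlt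
  · apply abs_fGamma (irrational_fGamma hy).ne_zero
    rw [abs_fGamma_of_one_le_abs hle]
    exact h.sub_one
  · have hfy : |fGamma y| = |y|⁻¹ := abs_fGamma_of_abs_lt_one hlt
    have hy0 : 0 < |y| := abs_pos.mpr hy.ne_zero
    rw [abs_fGamma_of_one_le_abs (hfy ▸ (one_le_inv₀ hy0).mpr hlt.le), hfy]
    exact (h.inv hy0.ne').sub_one

theorem abs_fGamma_iterate_two_mul (hx : Irrational x) (n : ℕ) :
    IsUnimodularImage (n + 2) |x| |fGamma^[2 * n] x| := by
  induction n with
  | zero => exact .refl |x|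
  | succ n ih =>
    rw [mul_add_one, Function.iterate_succ_apply', Function.iterate_succ_apply', add_right_comm]
    exact ih.abs_fGamma_fGamma (irrational_fGamma_iterate hx _)

end IsUnimodularImage

theorem stmt_15_general {x : ℝ} (hx : NotQuadratic x) {N : ℕ} (hN : 1 ≤ N) :
    fGamma^[N] x ≠ x := by
  intro hper
  have hper_two : fGamma^[2 * N] x = x := Function.IsPeriodicPt.const_mul hper 2
  have himage := IsUnimodularImage.abs_fGamma_iterate_two_mul hx.irrational N
  rw [hper_two] at himage
  have hle : N + 2 ≤ 2 := himage.le_two_of_notQuadratic hx.abs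
  lia

theorem stmt_15 :
    ∀ N : ℕ, 1 ≤ N → fGamma^[N] ((2 : ℝ) ^ ((1 : ℝ) / 3)) ≠ (2 : ℝ) ^ ((1 : ℝ) / 3) :=
  fun _ ↦ stmt_15_general notQuadratic_cbrt_two
end
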